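/- Let (L, E, U) be an LEU-decomposition of an n×n matrix A over F (with I = J = 𝟙). Then the matrix ℰ_n A admits a generalized Bruhat decomposition ℰ_n A = V₁ w V₂, where V₁ = ℰ_n (L⁻¹ − (𝟙 − I_E)) ℰ_n and V₂ = U⁻¹ − (𝟙 − J_E) are upper triangular matrices and w = ℰ_n (E + Ē) is a permutation matrix. -/

import Mathlib

open Matrix

/-- `P_n`: matrices all of whose entries lie in `{0,1}`, with at most one nonzero
entry in each row and at most one nonzero entry in each column. -/
def InP {F : Type*} [Field F] {m : Type*} (E : Matrix m m F) : Prop :=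
  (∀ i j, E i j = 0 ∨ E i j = 1) ∧
  (∀ i j k, E i j ≠ 0 → E i k ≠ 0 → j = k) ∧
  (∀ i j k, E i j ≠ 0 → E k j ≠ 0 → i = k)

/-- `D_n`: diagonal matrices with diagonal entries in `{0,1}`. -/
def InD {F : Type*} [Field F] {m : Type*} (M : Matrix m m F) : Prop :=
  M.IsDiag ∧ ∀ i, M i i = 0 ∨ M i i = 1

/-- `F_{I,J}`: the set of matrices `B` with `I * B * J = B`. -/
def InFIJ {F : Type*} [Field F] {n : ℕ} (I J B : Matrix (Fin n) (Fin n) F) : Prop :=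
  I * B * J = B

/-- `(L, E, U)` is an LEU-decomposition of `A ∈ F_{I,J}`: `A = L⁻¹ * E * U⁻¹`,
`E ∈ P_n`, `L` is an invertible lower triangular matrix, `U` is an upper
triangular matrix with unit diagonal, `L - (𝟙 - I_E) ∈ F_{I, I_E}` and
`U - (𝟙 - J_E) ∈ F_{J_E, J}`, where `I_E = E * Eᵀ` and `J_E = Eᵀ * E`. -/
def IsLEU {F : Type*} [Field F] {n : ℕ}
    (I J A L E U : Matrix (Fin n) (Fin n) F) : Prop :=
  A = L⁻¹ * E * U⁻¹ ∧ InP E ∧ IsUnit L ∧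
  (∀ i j : Fin n, i < j → L i j = 0) ∧
  (∀ i j : Fin n, j < i → U i j = 0) ∧ (∀ i, U i i = 1) ∧
  InFIJ I (E * Eᵀ) (L - (1 - E * Eᵀ)) ∧
  InFIJ (Eᵀ * E) J (U - (1 - Eᵀ * E))

/-- The number of zero rows of `E` preceding the row `i`. -/
def zeroRowsBelow {F : Type*} [Field F] [DecidableEq F] {n : ℕ}
    (E : Matrix (Fin n) (Fin n) F) (i : Fin n) : ℕ :=
  letI : ∀ i' : Fin n, Decidable (∀ k, E i' k = 0) := fun _ => inferInstance
  (Finset.univ.filter (fun i' : Fin n => i' < i ∧ ∀ k, E i' k = 0)).card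

/-- The number of zero columns of `E` preceding the column `j`. -/
def zeroColsBelow {F : Type*} [Field F] [DecidableEq F] {n : ℕ}
    (E : Matrix (Fin n) (Fin n) F) (j : Fin n) : ℕ :=
  (Finset.univ.filter (fun j' : Fin n => j' < j ∧ ∀ k, E k j' = 0)).card

/-- The complementary matrix `Ē` of `E`: it has the entry `1` exactly at the
positions `(i_k, j_k)`, where `i_1 < … < i_s` are the zero rows of `E` and
`j_1 < … < j_s` are the zero columns of `E`, and `0` elsewhere. -/
def complMat {F : Type*} [Field F] [DecidableEq F] {n : ℕ}
    (E : Matrix (Fin n) (Fin n) F) : Matrix (Fin n) (Fin n) F :=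
  Matrix.of fun i j =>
    if (∀ k, E i k = 0) ∧ (∀ k, E k j = 0) ∧ zeroRowsBelow E i = zeroColsBelow E j
    then 1 else 0

/-- A permutation matrix (an element of `S_n`). -/
def IsPermMat {F : Type*} [Field F] {m : Type*} [DecidableEq m]
    (M : Matrix m m F) : Prop :=
  ∃ σ : Equiv.Perm m, ∀ i j, M i j = if σ i = j then 1 else 0

/-- `ℰ_n`: the anti-diagonal permutation matrix, with entry `1` in positions
`(k, n+1-k)` and `0` elsewhere. -/
def antiDiag (F : Type*) [Field F] (n : ℕ) : Matrix (Fin n) (Fin n) F :=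
  Matrix.of fun i j => if j = i.rev then 1 else 0

/-!
For any `I` and `J`, the support conditions on `L` and `U` give `L (𝟙 - I_E) = 𝟙 - I_E` and
`(𝟙 - J_E) U = 𝟙 - J_E`. Both identities pass to the inverses, so the two triangular factors come
from `L⁻¹ - (𝟙 - I_E) = L⁻¹ I_E` and `U⁻¹ - (𝟙 - J_E) = J_E U⁻¹`. Since `ℰ_n² = 𝟙`, the product
`V₁ w V₂` collapses to `ℰ_n L⁻¹ (I_E (E + Ē) J_E) U⁻¹`, and the middle factor is `E` because
`E Eᵀ E = E` and `Eᵀ Ē = 0`. The matrix `E + Ē` is a permutation matrix because `E` has as many zero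
rows as zero columns, so that `Ē` matches them completely.
-/

section RankInFinset

section Preorder

variable {α : Type*} [Preorder α] [DecidableLT α] (s : Finset α)

lemma strictMonoOn_card_filter_lt : StrictMonoOn (fun a ↦ (s.filter (· < a)).card) s := by
  intro a ha b _ hab
  refine Finset.card_lt_card <| (Finset.ssubset_iff_of_subset ?_).2 ⟨a, ?_, ?_⟩
  · exact Finset.monotone_filter_right s fun x _ hxa ↦ hxa.trans hab
  · simpa [hab] using ha
  · simp

variable {s} in
lemma card_filter_lt_lt_card {a : α} (ha : a ∈ s) : (s.filter (· < a)).card < s.card :=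
  Finset.card_lt_card <| Finset.filter_ssubset.2 ⟨a, ha, lt_irrefl a⟩

end Preorder

lemma exists_mem_card_filter_lt_eq {α : Type*} [LinearOrder α] (s : Finset α) {k : ℕ}
    (hk : k < s.card) : ∃ a ∈ s, (s.filter (· < a)).card = k := by
  have hmaps : Set.MapsTo (fun a ↦ (s.filter (· < a)).card) s (Finset.range s.card) :=
    fun a ha ↦ Finset.mem_range.2 (card_filter_lt_lt_card ha)
  exact Finset.surjOn_of_injOn_of_card_le _ hmaps (strictMonoOn_card_filter_lt s).injOn
    (Finset.card_range _).le (by simpa using hk)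

end RankInFinset

section IdempotentCorner

variable {R : Type*} [Ring R] {a e x y : R}

lemma sub_one_sub_eq_mul_right (he : IsIdempotentElem e)
    (hx : a * (x - (1 - e)) * e = x - (1 - e)) (hyx : y * x = 1) : y - (1 - e) = y * e := by
  have hzero : (x - (1 - e)) * (1 - e) = 0 := by
    rw [← hx, mul_assoc, he.mul_one_sub_self, mul_zero]
  have hxe : x * (1 - e) = 1 - e := by rwa [sub_mul, he.one_sub.eq, sub_eq_zero] at hzero
  have hye : y * (1 - e) = 1 - e := by rw [← hxe, ← mul_assoc, hyx, one_mul, hxe]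
  rw [← hye, mul_sub, mul_one, sub_sub_cancel]

lemma sub_one_sub_eq_mul_left (he : IsIdempotentElem e)
    (hx : e * (x - (1 - e)) * a = x - (1 - e)) (hxy : x * y = 1) : y - (1 - e) = e * y := by
  have hzero : (1 - e) * (x - (1 - e)) = 0 := by
    rw [← hx, mul_assoc, ← mul_assoc, he.one_sub_mul_self, zero_mul]
  have hxe : (1 - e) * x = 1 - e := by rwa [mul_sub, he.one_sub.eq, sub_eq_zero] at hzero
  have hye : (1 - e) * y = 1 - e := by rw [← hxe, mul_assoc, hxy, mul_one, hxe]
  rw [← hye, sub_mul, one_mul, sub_sub_cancel]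

end IdempotentCorner

section PartialPermutation

variable {F : Type*} [Field F] {m : Type*} {E M N : Matrix m m F}

namespace InP

lemma transpose (hE : InP E) : InP Eᵀ :=
  ⟨fun i j ↦ hE.1 j i, fun i j k ↦ hE.2.2 j i k, fun i j k ↦ hE.2.1 j i k⟩

lemma add (hM : InP M) (hN : InP N) (hrow : ∀ i, (∀ j, M i j = 0) ∨ ∀ j, N i j = 0)
    (hcol : ∀ j, (∀ i, M i j = 0) ∨ ∀ i, N i j = 0) : InP (M + N) := by
  refine ⟨fun i j ↦ ?_, fun i j k ↦ ?_, fun i j k ↦ ?_⟩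
  · rcases hrow i with h | h
    · simpa [h] using hN.1 i j
    · simpa [h] using hM.1 i j
  · rcases hrow i with h | h
    · simpa [h] using hN.2.1 i j k
    · simpa [h] using hM.2.1 i j k
  · rcases hcol j with h | h
    · simpa [h] using hN.2.2 i j k
    · simpa [h] using hM.2.2 i j k

lemma isPermMat [Finite m] [DecidableEq m] (hM : InP M) (hrow : ∀ i, ∃ j, M i j ≠ 0) :
    IsPermMat M := by
  choose σ hσ using hrow
  have hσ_inj : Function.Injective σ := fun i i' h ↦ hM.2.2 i (σ i) i' (hσ i) (h ▸ hσ i')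
  refine ⟨Equiv.ofBijective σ (Finite.injective_iff_bijective.1 hσ_inj), fun i j ↦ ?_⟩
  rw [Equiv.ofBijective_apply]
  split_ifs with hij
  · exact hij ▸ (hM.1 i (σ i)).resolve_left (hσ i)
  · exact of_not_not fun hne ↦ hij (hM.2.1 i (σ i) j (hσ i) hne)

variable [Fintype m]

lemma isDiag_mul_transpose (hE : InP E) : (E * Eᵀ).IsDiag := by
  intro i j hij
  rw [Matrix.mul_apply]
  refine Finset.sum_eq_zero fun k _ ↦ of_not_not fun hne ↦ hij ?_
  exact hE.2.2 i k j (left_ne_zero_of_mul hne) (right_ne_zero_of_mul hne)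

lemma isDiag_transpose_mul (hE : InP E) : (Eᵀ * E).IsDiag :=
  hE.transpose.isDiag_mul_transpose

lemma mul_transpose_mul (hE : InP E) : E * Eᵀ * E = E := by
  ext i j
  have hii : (E * Eᵀ) i i * E i j = E i j := by
    rcases hE.1 i j with h | h
    · rw [h, mul_zero]
    · rw [Matrix.mul_apply, Finset.sum_eq_single j, Matrix.transpose_apply, h, one_mul, one_mul]
      · intro k _ hkj
        have hik : E i k = 0 := of_not_not fun hne ↦ hkj (hE.2.1 i k j hne (by simp [h]))
        rw [hik, zero_mul]
      · simp
  rw [Matrix.mul_apply, Finset.sum_eq_single i, hii]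
  · intro k _ hki
    rw [hE.isDiag_mul_transpose hki.symm, zero_mul]
  · simp

lemma isIdempotentElem_mul_transpose (hE : InP E) : IsIdempotentElem (E * Eᵀ) := by
  rw [IsIdempotentElem, ← mul_assoc, hE.mul_transpose_mul]

lemma isIdempotentElem_transpose_mul (hE : InP E) : IsIdempotentElem (Eᵀ * E) :=
  hE.transpose.isIdempotentElem_mul_transpose

end InP

end PartialPermutation

section ZeroRows

open Classical in
/-- The indices of the zero rows of a matrix. The zero columns of `E` are `zeroRows Eᵀ`. -/
noncomputable def zeroRows {R m n : Type*} [Zero R] [Fintype m] (E : Matrix m n R) : Finset m :=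
  Finset.univ.filter fun i ↦ ∀ k, E i k = 0

lemma mem_zeroRows {R m n : Type*} [Zero R] [Fintype m] {E : Matrix m n R} {i : m} :
    i ∈ zeroRows E ↔ ∀ k, E i k = 0 := by
  simp [zeroRows]

lemma notMem_zeroRows {R m n : Type*} [Zero R] [Fintype m] {E : Matrix m n R} {i : m} :
    i ∉ zeroRows E ↔ ∃ k, E i k ≠ 0 := by
  simp [mem_zeroRows]

variable {F : Type*} [Field F] {m : Type*} [Fintype m] {E : Matrix m m F}

lemma InP.card_zeroRows_transpose_le (hE : InP E) :
    (zeroRows Eᵀ).card ≤ (zeroRows E).card := by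
  classical
  have hcompl : (zeroRows E)ᶜ.card ≤ (zeroRows Eᵀ)ᶜ.card := by
    refine Finset.card_le_card_of_forall_subsingleton (fun i j ↦ E i j ≠ 0) (fun i hi ↦ ?_) ?_
    · obtain ⟨j, hij⟩ := notMem_zeroRows.1 (Finset.mem_compl.1 hi)
      exact ⟨j, Finset.mem_compl.2 (notMem_zeroRows.2 ⟨i, hij⟩), hij⟩
    · exact fun j _ i hi k hk ↦ hE.2.2 i j k hi.2 hk.2
  have hrows := Finset.card_add_card_compl (zeroRows E)
  have hcols := Finset.card_add_card_compl (zeroRows Eᵀ)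
  omega

lemma InP.card_zeroRows_transpose (hE : InP E) : (zeroRows Eᵀ).card = (zeroRows E).card :=
  hE.card_zeroRows_transpose_le.antisymm hE.transpose.card_zeroRows_transpose_le

end ZeroRows

section Complement

variable {F : Type*} [Field F] [DecidableEq F] {n : ℕ} {E : Matrix (Fin n) (Fin n) F}
  {i j : Fin n}

lemma zeroRowsBelow_eq_card (E : Matrix (Fin n) (Fin n) F) (i : Fin n) :
    zeroRowsBelow E i = ((zeroRows E).filter (· < i)).card := by
  rw [zeroRowsBelow]
  congr 1
  ext k
  simp [mem_zeroRows, and_comm]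

lemma zeroRowsBelow_transpose (E : Matrix (Fin n) (Fin n) F) :
    zeroRowsBelow Eᵀ = zeroColsBelow E :=
  rfl

lemma zeroRowsBelow_injOn (E : Matrix (Fin n) (Fin n) F) :
    Set.InjOn (zeroRowsBelow E) (zeroRows E) := by
  simpa only [← zeroRowsBelow_eq_card] using (strictMonoOn_card_filter_lt (zeroRows E)).injOn

lemma complMat_ne_zero_iff : complMat E i j ≠ 0 ↔
    i ∈ zeroRows E ∧ j ∈ zeroRows Eᵀ ∧ zeroRowsBelow E i = zeroColsBelow E j := by
  simp [complMat, mem_zeroRows]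

lemma transpose_mul_complMat (E : Matrix (Fin n) (Fin n) F) : Eᵀ * complMat E = 0 := by
  ext i j
  rw [Matrix.mul_apply]
  refine Finset.sum_eq_zero fun k _ ↦ of_not_not fun hne ↦ left_ne_zero_of_mul hne ?_
  exact mem_zeroRows.1 (complMat_ne_zero_iff.1 (right_ne_zero_of_mul hne)).1 i

lemma inP_complMat (E : Matrix (Fin n) (Fin n) F) : InP (complMat E) := by
  refine ⟨fun i j ↦ ?_, fun i j k hij hik ↦ ?_, fun i j k hij hkj ↦ ?_⟩
  · rw [complMat, Matrix.of_apply]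
    split_ifs <;> simp
  · obtain ⟨-, hj, hij⟩ := complMat_ne_zero_iff.1 hij
    obtain ⟨-, hk, hik⟩ := complMat_ne_zero_iff.1 hik
    exact zeroRowsBelow_injOn Eᵀ hj hk (hij.symm.trans hik)
  · obtain ⟨hi, -, hij⟩ := complMat_ne_zero_iff.1 hij
    obtain ⟨hk, -, hkj⟩ := complMat_ne_zero_iff.1 hkj
    exact zeroRowsBelow_injOn E hi hk (hij.trans hkj.symm)

lemma complMat_row_eq_zero (hi : i ∉ zeroRows E) (j : Fin n) : complMat E i j = 0 :=
  of_not_not fun hne ↦ hi (complMat_ne_zero_iff.1 hne).1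

lemma complMat_col_eq_zero (hj : j ∉ zeroRows Eᵀ) (i : Fin n) : complMat E i j = 0 :=
  of_not_not fun hne ↦ hj (complMat_ne_zero_iff.1 hne).2.1

lemma InP.add_complMat (hE : InP E) : InP (E + complMat E) :=
  hE.add (inP_complMat E)
    (fun i ↦ (em (i ∈ zeroRows E)).imp mem_zeroRows.1 complMat_row_eq_zero)
    (fun j ↦ (em (j ∈ zeroRows Eᵀ)).imp mem_zeroRows.1 complMat_col_eq_zero)

lemma InP.exists_complMat_ne_zero (hE : InP E) (hi : i ∈ zeroRows E) :
    ∃ j, complMat E i j ≠ 0 := by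
  have hlt : zeroRowsBelow E i < (zeroRows Eᵀ).card := by
    rw [hE.card_zeroRows_transpose, zeroRowsBelow_eq_card]
    exact card_filter_lt_lt_card hi
  obtain ⟨j, hj, hij⟩ := exists_mem_card_filter_lt_eq (zeroRows Eᵀ) hlt
  rw [← zeroRowsBelow_eq_card, zeroRowsBelow_transpose] at hij
  exact ⟨j, complMat_ne_zero_iff.2 ⟨hi, hj, hij.symm⟩⟩

lemma InP.isPermMat_add_complMat (hE : InP E) : IsPermMat (E + complMat E) := by
  refine hE.add_complMat.isPermMat fun i ↦ ?_
  by_cases hi : i ∈ zeroRows E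
  · obtain ⟨j, hj⟩ := hE.exists_complMat_ne_zero hi
    exact ⟨j, by rwa [Matrix.add_apply, mem_zeroRows.1 hi j, zero_add]⟩
  · obtain ⟨j, hj⟩ := notMem_zeroRows.1 hi
    exact ⟨j, by rwa [Matrix.add_apply, complMat_row_eq_zero hi, add_zero]⟩

lemma InP.mul_add_complMat_mul (hE : InP E) :
    E * Eᵀ * (E + complMat E) * (Eᵀ * E) = E := by
  rw [mul_add, hE.mul_transpose_mul, mul_assoc E, transpose_mul_complMat, mul_zero, add_zero,
    ← mul_assoc, hE.mul_transpose_mul]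

end Complement

section AntiDiagonal

variable {F : Type*} [Field F] {n : ℕ} {M : Matrix (Fin n) (Fin n) F}

lemma antiDiag_eq_permMatrix : antiDiag F n = Fin.revPerm.permMatrix F := by
  ext i j
  simp [antiDiag, Equiv.Perm.permMatrix, PEquiv.toMatrix_apply, eq_comm]

lemma antiDiag_mul (M : Matrix (Fin n) (Fin n) F) :
    antiDiag F n * M = M.submatrix Fin.rev id := by
  rw [antiDiag_eq_permMatrix, Equiv.Perm.permMatrix, PEquiv.toMatrix_toPEquiv_mul]
  rfl

lemma mul_antiDiag (M : Matrix (Fin n) (Fin n) F) :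
    M * antiDiag F n = M.submatrix id Fin.rev := by
  rw [antiDiag_eq_permMatrix, Equiv.Perm.permMatrix, PEquiv.mul_toMatrix_toPEquiv]
  rfl

lemma antiDiag_mul_self : antiDiag F n * antiDiag F n = 1 := by
  rw [antiDiag_mul, antiDiag]
  ext i j
  simp [Matrix.one_apply, eq_comm]

lemma isUpperTriangular_antiDiag_mul_mul_antiDiag (hM : M.IsLowerTriangular) :
    (antiDiag F n * M * antiDiag F n).IsUpperTriangular := by
  intro i j hji
  rw [antiDiag_mul, mul_antiDiag]
  exact hM (Fin.rev_lt_rev.2 hji)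

lemma isPermMat_antiDiag_mul (hM : IsPermMat M) : IsPermMat (antiDiag F n * M) := by
  obtain ⟨σ, hσ⟩ := hM
  exact ⟨Fin.revPerm.trans σ, fun i j ↦ by simp [antiDiag_mul, hσ]⟩

end AntiDiagonal

lemma blockTriangular_of_isDiag {R m α : Type*} [Zero R] [Preorder α] {M : Matrix m m R}
    (hM : M.IsDiag) (b : m → α) : M.BlockTriangular b :=
  fun _ _ hlt ↦ hM fun h ↦ hlt.ne (congrArg b h.symm)

namespace IsLEU

variable {F : Type*} [Field F] {n : ℕ} {I J A L E U : Matrix (Fin n) (Fin n) F}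

lemma eq_mul (h : IsLEU I J A L E U) : A = L⁻¹ * E * U⁻¹ :=
  h.1

lemma inP (h : IsLEU I J A L E U) : InP E :=
  h.2.1

lemma isUnit_L (h : IsLEU I J A L E U) : IsUnit L :=
  h.2.2.1

lemma isLowerTriangular_L (h : IsLEU I J A L E U) : L.IsLowerTriangular :=
  fun i j ↦ h.2.2.2.1 i j

lemma isUpperTriangular_U (h : IsLEU I J A L E U) : U.IsUpperTriangular :=
  fun i j ↦ h.2.2.2.2.1 i j

lemma isUnit_U (h : IsLEU I J A L E U) : IsUnit U := by
  obtain ⟨-, -, -, -, -, hdiag, -, -⟩ := id h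
  rw [Matrix.isUnit_iff_isUnit_det, Matrix.det_of_isUpperTriangular h.isUpperTriangular_U]
  simp [hdiag]

lemma inv_L_sub (h : IsLEU I J A L E U) : L⁻¹ - (1 - E * Eᵀ) = L⁻¹ * (E * Eᵀ) := by
  obtain ⟨-, -, -, -, -, -, hsupp, -⟩ := id h
  exact sub_one_sub_eq_mul_right h.inP.isIdempotentElem_mul_transpose hsupp
    (Matrix.nonsing_inv_mul L ((Matrix.isUnit_iff_isUnit_det L).1 h.isUnit_L))

lemma inv_U_sub (h : IsLEU I J A L E U) : U⁻¹ - (1 - Eᵀ * E) = Eᵀ * E * U⁻¹ := by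
  obtain ⟨-, -, -, -, -, -, -, hsupp⟩ := id h
  exact sub_one_sub_eq_mul_left h.inP.isIdempotentElem_transpose_mul hsupp
    (Matrix.mul_nonsing_inv U ((Matrix.isUnit_iff_isUnit_det U).1 h.isUnit_U))

lemma isLowerTriangular_inv_L_sub (h : IsLEU I J A L E U) :
    (L⁻¹ - (1 - E * Eᵀ)).IsLowerTriangular := by
  have := h.isUnit_L.invertible
  exact (Matrix.blockTriangular_inv_of_blockTriangular h.isLowerTriangular_L).sub <|
    blockTriangular_of_isDiag (Matrix.isDiag_one.sub h.inP.isDiag_mul_transpose) _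

lemma isUpperTriangular_inv_U_sub (h : IsLEU I J A L E U) :
    (U⁻¹ - (1 - Eᵀ * E)).IsUpperTriangular := by
  have := h.isUnit_U.invertible
  exact (Matrix.blockTriangular_inv_of_blockTriangular h.isUpperTriangular_U).sub <|
    blockTriangular_of_isDiag (Matrix.isDiag_one.sub h.inP.isDiag_transpose_mul) _

lemma antiDiag_mul_eq [DecidableEq F] (h : IsLEU I J A L E U) :
    antiDiag F n * A =
      (antiDiag F n * (L⁻¹ - (1 - E * Eᵀ)) * antiDiag F n) *
        (antiDiag F n * (E + complMat E)) * (U⁻¹ - (1 - Eᵀ * E)) := by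
  calc
    _ = antiDiag F n * (L⁻¹ * (E * Eᵀ * (E + complMat E) * (Eᵀ * E)) * U⁻¹) := by
      rw [h.inP.mul_add_complMat_mul, ← h.eq_mul]
    _ = antiDiag F n * (L⁻¹ * (E * Eᵀ)) * (antiDiag F n * antiDiag F n) * (E + complMat E) *
          (Eᵀ * E * U⁻¹) := by
      rw [antiDiag_mul_self, mul_one]
      simp only [mul_assoc]
    _ = _ := by
      rw [h.inv_L_sub, h.inv_U_sub]
      simp only [mul_assoc]

end IsLEU

theorem bruhat_decomposition_general {F : Type*} [Field F] [DecidableEq F] {n : ℕ}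
    {I J : Matrix (Fin n) (Fin n) F} (A L E U : Matrix (Fin n) (Fin n) F)
    (hLEU : IsLEU I J A L E U) :
    antiDiag F n * A =
      (antiDiag F n * (L⁻¹ - (1 - E * Eᵀ)) * antiDiag F n) *
        (antiDiag F n * (E + complMat E)) * (U⁻¹ - (1 - Eᵀ * E)) ∧
    (∀ i j : Fin n, j < i →
      (antiDiag F n * (L⁻¹ - (1 - E * Eᵀ)) * antiDiag F n) i j = 0) ∧
    (∀ i j : Fin n, j < i → (U⁻¹ - (1 - Eᵀ * E)) i j = 0) ∧
    IsPermMat (antiDiag F n * (E + complMat E)) :=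
  ⟨hLEU.antiDiag_mul_eq,
    fun _ _ hji ↦
      isUpperTriangular_antiDiag_mul_mul_antiDiag hLEU.isLowerTriangular_inv_L_sub hji,
    fun _ _ hji ↦ hLEU.isUpperTriangular_inv_U_sub hji,
    isPermMat_antiDiag_mul hLEU.inP.isPermMat_add_complMat⟩

/-- Sentence 2: if `(L,E,U)` is an LEU-decomposition of `A`, then `ℰ_n A` has the
generalized Bruhat decomposition `ℰ_n A = V₁ w V₂` with
`V₁ = ℰ_n (L⁻¹ - (𝟙 - I_E)) ℰ_n` and `V₂ = U⁻¹ - (𝟙 - J_E)` upper triangular, and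
`w = ℰ_n (E + Ē)` a permutation matrix. -/
theorem bruhat_decomposition {F : Type*} [Field F] [DecidableEq F] {n : ℕ}
    (hn : 0 < n) (A L E U : Matrix (Fin n) (Fin n) F)
    (hLEU : IsLEU 1 1 A L E U) :
    antiDiag F n * A =
      (antiDiag F n * (L⁻¹ - (1 - E * Eᵀ)) * antiDiag F n) *
        (antiDiag F n * (E + complMat E)) * (U⁻¹ - (1 - Eᵀ * E)) ∧
    (∀ i j : Fin n, j < i →
      (antiDiag F n * (L⁻¹ - (1 - E * Eᵀ)) * antiDiag F n) i j = 0) ∧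
    (∀ i j : Fin n, j < i → (U⁻¹ - (1 - Eᵀ * E)) i j = 0) ∧
    IsPermMat (antiDiag F n * (E + complMat E)) :=
  bruhat_decomposition_general A L E U hLEU
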